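/- arXiv:2207.10419 — 3 statements merged into one kernel-verified Lean document; each statement's English description precedes it below -/
import Mathlib

section
/- Let g be an odd Schwartz function on ℝ. Then the function h(x) = ∫_{−∞}^x g(y) dy is an even Schwartz function on ℝ with h′ = g. -/
/-!
Let `h x = ∫ y in Iic x, g y`. The fundamental theorem of calculus gives `h' = g`, so `h` is smooth
and its derivatives of positive order are derivatives of `g`; only the decay of `h` itself is left.
For `x ≤ 0` one has `|x| ≤ |y|` on `Iic x`, hence `|x| ^ k * ‖h x‖ ≤ ∫ y, |y| ^ k * ‖g y‖`. Since
`g` is odd, `∫ y, g y = 0`, so that `h x = -∫ y in Ioi x, g y`, and the same estimate on `Ioi x`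
covers `0 ≤ x`. Reflecting this last integral through the origin shows that `h` is even.
-/

open MeasureTheory Set

/-- A function `ℝ → ℂ` is Schwartz if it is (the underlying function of) a Schwartz map. -/
def IsSchwartz (f : ℝ → ℂ) : Prop := ∃ F : SchwartzMap ℝ ℂ, ⇑F = f

section Primitive

variable {E : Type*} [NormedAddCommGroup E] [NormedSpace ℝ E]

theorem hasDerivAt_integral_Iic [CompleteSpace E] {f : ℝ → E} {a x : ℝ}
    (hf : IntegrableOn f (Iic a)) (hxa : x < a) (hcont : ContinuousAt f x) :
    HasDerivAt (fun t => ∫ y in Iic t, f y) (f x) x := by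
  have hmeas : StronglyMeasurableAtFilter f (nhds x) :=
    ⟨Iic a, Iic_mem_nhds hxa, hf.aestronglyMeasurable⟩
  have hftc : HasDerivAt (fun t => (∫ y in Iic x, f y) + ∫ y in x..t, f y) (f x) x :=
    (intervalIntegral.integral_hasDerivAt_right .refl hmeas hcont).const_add _
  refine hftc.congr_of_eventuallyEq ?_
  filter_upwards [Iic_mem_nhds hxa] with t hta
  rw [← intervalIntegral.integral_Iic_sub_Iic (hf.mono_set (Iic_subset_Iic.mpr hxa.le))
    (hf.mono_set (Iic_subset_Iic.mpr hta)), add_sub_cancel]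

theorem integral_eq_zero_of_odd {G : Type*} [MeasurableSpace G] [AddGroup G]
    [MeasurableNeg G] {μ : Measure G} [μ.IsNegInvariant] {f : G → E} (hodd : Function.Odd f) :
    ∫ x, f x ∂μ = 0 := by
  have : IsAddTorsionFree E := .of_isTorsionFree ℝ E
  rw [← self_eq_neg]
  calc ∫ x, f x ∂μ = ∫ x, f (-x) ∂μ := (integral_neg_eq_self f μ).symm
    _ = -∫ x, f x ∂μ := by simp only [hodd _, integral_neg]

theorem integral_Iic_eq_neg_integral_Ioi {f : ℝ → E} (hf : Integrable f) (hzero : ∫ y, f y = 0)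
    (x : ℝ) : ∫ y in Iic x, f y = -∫ y in Ioi x, f y := by
  rw [eq_neg_iff_add_eq_zero,
    intervalIntegral.integral_Iic_add_Ioi hf.integrableOn hf.integrableOn, hzero]

theorem even_integral_Iic_of_odd {f : ℝ → E} (hf : Integrable f) (hodd : Function.Odd f) :
    Function.Even fun x => ∫ y in Iic x, f y := fun x =>
  calc ∫ y in Iic (-x), f y
      = -∫ y in Ioi (-x), f y :=
        integral_Iic_eq_neg_integral_Ioi hf (integral_eq_zero_of_odd hodd) (-x)
    _ = -∫ y in Iic x, f (-y) := by rw [integral_comp_neg_Iic]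
    _ = ∫ y in Iic x, f y := by simp only [hodd _, integral_neg, neg_neg]

theorem norm_pow_mul_norm_setIntegral_le {V : Type*} [NormedAddCommGroup V] [MeasurableSpace V]
    {μ : Measure V} {f : V → E} {k : ℕ} {s : Set V} {x : V} (hs : MeasurableSet s)
    (hf : Integrable (fun y => ‖y‖ ^ k * ‖f y‖) μ) (hx : ∀ y ∈ s, ‖x‖ ≤ ‖y‖) :
    ‖x‖ ^ k * ‖∫ y in s, f y ∂μ‖ ≤ ∫ y, ‖y‖ ^ k * ‖f y‖ ∂μ :=
  calc ‖x‖ ^ k * ‖∫ y in s, f y ∂μ‖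
      ≤ ‖x‖ ^ k * ∫ y in s, ‖f y‖ ∂μ := by
        gcongr
        exact norm_integral_le_integral_norm f
    _ = ∫ y in s, ‖x‖ ^ k * ‖f y‖ ∂μ := (integral_const_mul _ _).symm
    _ ≤ ∫ y in s, ‖y‖ ^ k * ‖f y‖ ∂μ := by
        refine integral_mono_of_nonneg (.of_forall fun y => by positivity) hf.integrableOn
          (ae_restrict_of_forall_mem hs fun y hy => ?_)
        have hxy : ‖x‖ ≤ ‖y‖ := hx y hy
        dsimp only
        gcongr
    _ ≤ ∫ y, ‖y‖ ^ k * ‖f y‖ ∂μ :=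
        setIntegral_le_integral hf (.of_forall fun y => by positivity)

theorem norm_pow_mul_norm_integral_Iic_le {f : ℝ → E} {k : ℕ} (hf : Integrable f)
    (hzero : ∫ y, f y = 0) (hfk : Integrable fun y => ‖y‖ ^ k * ‖f y‖) (x : ℝ) :
    ‖x‖ ^ k * ‖∫ y in Iic x, f y‖ ≤ ∫ y, ‖y‖ ^ k * ‖f y‖ := by
  rcases le_total x 0 with hx | hx
  · exact norm_pow_mul_norm_setIntegral_le measurableSet_Iic hfk fun y hy =>
      abs_le_abs_of_nonpos hx hy
  · rw [integral_Iic_eq_neg_integral_Ioi hf hzero, norm_neg]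
    exact norm_pow_mul_norm_setIntegral_le measurableSet_Ioi hfk fun y hy =>
      abs_le_abs_of_nonneg hx (mem_Ioi.mp hy).le

theorem exists_schwartzMap_eq_of_hasDerivAt {f : ℝ → E} (g : SchwartzMap ℝ E)
    (hderiv : ∀ x, HasDerivAt f (g x) x)
    (hdecay : ∀ k : ℕ, ∃ C : ℝ, ∀ x, ‖x‖ ^ k * ‖f x‖ ≤ C) :
    ∃ F : SchwartzMap ℝ E, ⇑F = f := by
  have hderiv_eq : deriv f = g := funext fun x => (hderiv x).deriv
  refine ⟨⟨f, ?_, fun k n => ?_⟩, rfl⟩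
  · refine contDiff_infty_iff_deriv.mpr ⟨fun x => (hderiv x).differentiableAt, ?_⟩
    rw [hderiv_eq]
    exact g.smooth'
  · cases n with
    | zero => simpa only [norm_iteratedFDeriv_zero] using hdecay k
    | succ n =>
      obtain ⟨C, hC⟩ := g.decay' k n
      refine ⟨C, fun x => ?_⟩
      rw [norm_iteratedFDeriv_eq_norm_iteratedDeriv, iteratedDeriv_succ', hderiv_eq,
        ← norm_iteratedFDeriv_eq_norm_iteratedDeriv]
      exact hC x

theorem hasDerivAt_integral_Iic_schwartzMap [CompleteSpace E] (g : SchwartzMap ℝ E) (x : ℝ) :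
    HasDerivAt (fun t => ∫ y in Iic t, g y) (g x) x :=
  hasDerivAt_integral_Iic g.integrable.integrableOn (lt_add_one x) g.continuous.continuousAt

theorem exists_schwartzMap_eq_integral_Iic [CompleteSpace E] (g : SchwartzMap ℝ E)
    (hzero : ∫ y, g y = 0) : ∃ F : SchwartzMap ℝ E, ⇑F = fun x => ∫ y in Iic x, g y :=
  exists_schwartzMap_eq_of_hasDerivAt g (hasDerivAt_integral_Iic_schwartzMap g) fun k =>
    ⟨_, norm_pow_mul_norm_integral_Iic_le g.integrable hzero (g.integrable_pow_mul volume k)⟩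

theorem stmt10_general [CompleteSpace E] (g : SchwartzMap ℝ E) (hodd : Function.Odd g) :
    (∃ F : SchwartzMap ℝ E, ⇑F = fun x => ∫ y in Iic x, g y) ∧
    (Function.Even fun x => ∫ y in Iic x, g y) ∧
    (∀ x, HasDerivAt (fun t => ∫ y in Iic t, g y) (g x) x) :=
  ⟨exists_schwartzMap_eq_integral_Iic g (integral_eq_zero_of_odd hodd),
    even_integral_Iic_of_odd g.integrable hodd, hasDerivAt_integral_Iic_schwartzMap g⟩

end Primitive

theorem stmt10 (g : SchwartzMap ℝ ℂ) (hodd : ∀ x : ℝ, g (-x) = -g x) :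
    IsSchwartz (fun x : ℝ => ∫ y in Iic x, g y) ∧
    (∀ x : ℝ, (∫ y in Iic (-x), g y) = ∫ y in Iic x, g y) ∧
    (∀ x : ℝ, deriv (fun x : ℝ => ∫ y in Iic x, g y) x = g x) :=
  have ⟨hschwartz, heven, hderiv⟩ := stmt10_general g hodd
  ⟨hschwartz, heven, fun x => (hderiv x).deriv⟩
end

section
/- Let f ∈ S₀^ev. Then ℰf is smooth on (0,∞) and belongs to the strong Schwartz space of ℝ₊*: for every β ∈ ℝ, the function t ↦ e^{βt}·(ℰf)(e^t) is a Schwartz function on ℝ. In particular, for every N ∈ ℕ, (ℰf)(u) = O(u^N) as u → 0⁺ and (ℰf)(u) = O(u^{−N}) as u → ∞. -/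
/-! In the coordinate `t = log u`, the function `u^c ∑_{n ≥ 1} f(nu)` has derivative
`u^c ∑_{n ≥ 1} (c f + x f')(nu)`, and the space `S₀^ev` is stable under `f ↦ c f + x f'`. So every
derivative is again of the same shape, and it suffices to bound `u^c ∑_{n ≥ 1} f(nu)` on `(0, ∞)`
for each `f ∈ S₀^ev` and each real `c`: replacing `c` by `c ± 1` then gives exponential decay in
`t`.

For `u ≥ 1` the bound is the rapid decay of `f`. Poisson summation, whose zeroth terms vanish
because `f(0) = ∫ f = 0`, reads `∑_{n ≥ 1} f(nu) = u⁻¹ ∑_{n ≥ 1} 𝓕f(n/u)`, which reduces `u ≤ 1`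
to the rapid decay of `𝓕f` on `[1, ∞)`, with exponent `1 - c` in place of `c`. -/

open MeasureTheory Set Filter Asymptotics

/-- `(ℰ f)(u) = u^{1/2} ∑_{n ≥ 1} f(n u)`. -/
noncomputable def Emap (f : ℝ → ℂ) (u : ℝ) : ℂ :=
  (u : ℂ) ^ ((1 : ℂ)/2) * ∑' n : ℕ, f ((n + 1) * u)

open scoped SchwartzMap FourierTransform ContDiff Nat

section SchwartzCriterion

variable {E : Type*} [NormedAddCommGroup E] [NormedSpace ℝ E]

/-- A smooth function all of whose derivatives are `O(e^{-|t|})`, as a Schwartz function. -/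
def schwartzOfExpDecay (g : ℝ → E) (hg : ContDiff ℝ ∞ g)
    (hdecay : ∀ n : ℕ, ∃ C : ℝ, ∀ t, Real.exp |t| * ‖iteratedDeriv n g t‖ ≤ C) : 𝓢(ℝ, E) where
  toFun := g
  smooth' := hg
  decay' k n := by
    obtain ⟨C, hC⟩ := hdecay n
    refine ⟨k ! * C, fun t ↦ ?_⟩
    have hpow : |t| ^ k ≤ k ! * Real.exp |t| := by
      rw [← div_le_iff₀' (by positivity)]
      exact Real.pow_div_factorial_le_exp |t| (abs_nonneg t) k
    calc ‖t‖ ^ k * ‖iteratedFDeriv ℝ n g t‖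
        = |t| ^ k * ‖iteratedDeriv n g t‖ := by
          rw [norm_iteratedFDeriv_eq_norm_iteratedDeriv, Real.norm_eq_abs]
      _ ≤ k ! * Real.exp |t| * ‖iteratedDeriv n g t‖ := by gcongr
      _ = k ! * (Real.exp |t| * ‖iteratedDeriv n g t‖) := mul_assoc _ _ _
      _ ≤ k ! * C := by gcongr; exact hC t

end SchwartzCriterion

section ParityAndFourier

variable {E : Type*} [NormedAddCommGroup E]

lemma odd_deriv_of_even [NormedSpace ℝ E] {f : ℝ → E} (hf : f.Even) : (deriv f).Odd := fun x ↦ by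
  have h : deriv (fun y ↦ f (-y)) x = -deriv f (-x) := deriv_comp_neg f x
  rw [funext hf] at h
  rw [h, neg_neg]

variable [NormedSpace ℂ E]

lemma even_fourier_of_even {V : Type*} [NormedAddCommGroup V] [InnerProductSpace ℝ V]
    [FiniteDimensional ℝ V] [MeasurableSpace V] [BorelSpace V] {f : V → E} (hf : f.Even) :
    (𝓕 f).Even := fun w ↦ by
  rw [← Real.fourierInv_eq_fourier_neg, Real.fourierInv_eq_fourier_comp_neg, funext hf]

lemma fourier_comp_mul_right (f : ℝ → E) {u : ℝ} (hu : u ≠ 0) (w : ℝ) :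
    𝓕 (fun x ↦ f (x * u)) w = |u⁻¹| • 𝓕 f (w * u⁻¹) := by
  rw [Real.fourier_real_eq, Real.fourier_real_eq, ← Measure.integral_comp_mul_right]
  congr! 5 with x
  field_simp

end ParityAndFourier

section EulerOperator

variable {E : Type*} [NormedAddCommGroup E] [NormedSpace ℝ E]

/-- The Euler operator `f ↦ x f'`, the generator of the dilations `f ↦ f(u ·)`. -/
noncomputable def eulerCLM : 𝓢(ℝ, E) →L[ℝ] 𝓢(ℝ, E) :=
  SchwartzMap.smulLeftCLM E (fun x : ℝ ↦ x) ∘L SchwartzMap.derivCLM ℝ E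

/-- The operator `f ↦ c f + x f'`, the conjugate of `eulerCLM` by multiplication by `x^c`. -/
noncomputable def shiftedEulerCLM (c : ℝ) : 𝓢(ℝ, E) →L[ℝ] 𝓢(ℝ, E) :=
  c • .id ℝ 𝓢(ℝ, E) + eulerCLM

lemma eulerCLM_apply (f : 𝓢(ℝ, E)) (x : ℝ) : eulerCLM f x = x • deriv f x :=
  SchwartzMap.smulLeftCLM_apply_apply Function.HasTemperateGrowth.id' _ x

lemma shiftedEulerCLM_apply (c : ℝ) (f : 𝓢(ℝ, E)) (x : ℝ) :
    shiftedEulerCLM c f x = c • f x + eulerCLM f x := rfl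

lemma even_eulerCLM {f : 𝓢(ℝ, E)} (hf : (f : ℝ → E).Even) : (eulerCLM f : ℝ → E).Even :=
  fun x ↦ by
    rw [eulerCLM_apply, eulerCLM_apply, odd_deriv_of_even hf, neg_smul_neg]

lemma integral_eulerCLM (f : 𝓢(ℝ, E)) : ∫ x, eulerCLM f x = -∫ x, f x := by
  have hxf : Integrable fun x ↦ x • f x :=
    (SchwartzMap.smulLeftCLM E (fun x : ℝ ↦ x) f).integrable.congr <| .of_forall
      (SchwartzMap.smulLeftCLM_apply_apply Function.HasTemperateGrowth.id' f)
  have hderiv (x : ℝ) : HasDerivAt (fun x ↦ x • f x) (eulerCLM f x + f x) x := by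
    simpa only [eulerCLM_apply, one_smul] using! (hasDerivAt_id x).smul (f.hasDerivAt x)
  have hzero : ∫ x, eulerCLM f x + f x = 0 :=
    integral_eq_zero_of_hasDerivAt_of_integrable hderiv
      ((eulerCLM f).integrable.add f.integrable) hxf
  rw [integral_add (eulerCLM f).integrable f.integrable] at hzero
  exact eq_neg_of_add_eq_zero_left hzero

end EulerOperator

/-- The space `S₀^ev` of even Schwartz functions with vanishing value at `0` and vanishing
integral. -/
noncomputable def evenZeroSchwartz : Submodule ℂ 𝓢(ℝ, ℂ) where
  carrier := {f | (f : ℝ → ℂ).Even ∧ f 0 = 0 ∧ ∫ x, f x = 0}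
  zero_mem' := by simp [Function.Even]
  add_mem' := by
    rintro f g ⟨hf, hf0, hfi⟩ ⟨hg, hg0, hgi⟩
    refine ⟨fun x ↦ by simp [hf x, hg x], by simp [hf0, hg0], ?_⟩
    simp [integral_add f.integrable g.integrable, hfi, hgi]
  smul_mem' := by
    rintro c f ⟨hf, hf0, hfi⟩
    exact ⟨fun x ↦ by simp [hf x], by simp [hf0], by simp [integral_const_mul, hfi]⟩

lemma eulerCLM_mem_evenZeroSchwartz {f : 𝓢(ℝ, ℂ)} (hf : f ∈ evenZeroSchwartz) :
    eulerCLM f ∈ evenZeroSchwartz := by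
  obtain ⟨hev, -, hint⟩ := hf
  exact ⟨even_eulerCLM hev, by simp [eulerCLM_apply], by simp [integral_eulerCLM, hint]⟩

lemma mapsTo_shiftedEulerCLM_evenZeroSchwartz (c : ℝ) :
    MapsTo (shiftedEulerCLM c) evenZeroSchwartz (evenZeroSchwartz : Set 𝓢(ℝ, ℂ)) := fun _ hf ↦
  add_mem (Submodule.smul_of_tower_mem _ c hf) (eulerCLM_mem_evenZeroSchwartz hf)

section DilationSum

variable {E : Type*} [NormedAddCommGroup E] [NormedSpace ℝ E]

/-- The sum `∑_{n ≥ 1} f(nu)` in the definition of `Emap`, indexed from `0`. -/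
noncomputable def dilationSum (f : 𝓢(ℝ, E)) (u : ℝ) : E := ∑' n : ℕ, f ((n + 1) * u)

lemma summable_inv_succ_pow {k : ℕ} (hk : 1 < k) :
    Summable fun n : ℕ ↦ (((n : ℝ) + 1) ^ k)⁻¹ := by
  exact_mod_cast (summable_nat_add_iff 1).2 (Real.summable_nat_pow_inv.2 hk)

lemma norm_apply_succ_mul_le (f : 𝓢(ℝ, E)) (k n : ℕ) {u : ℝ} (hu : 0 < u) :
    ‖f ((n + 1) * u)‖ ≤ SchwartzMap.seminorm ℝ k 0 f * (u ^ k)⁻¹ * (((n : ℝ) + 1) ^ k)⁻¹ := by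
  have h := SchwartzMap.norm_pow_mul_le_seminorm ℝ f k ((n + 1) * u)
  rw [Real.norm_of_nonneg (by positivity), mul_pow] at h
  rw [mul_assoc, ← mul_inv, ← div_eq_mul_inv, mul_comm (u ^ k), le_div_iff₀' (by positivity)]
  exact h

lemma pow_mul_norm_dilationSum_le (f : 𝓢(ℝ, E)) {k : ℕ} (hk : 1 < k) {u : ℝ} (hu : 0 < u) :
    u ^ k * ‖dilationSum f u‖ ≤
      SchwartzMap.seminorm ℝ k 0 f * ∑' n : ℕ, (((n : ℝ) + 1) ^ k)⁻¹ := by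
  have h : ‖dilationSum f u‖ ≤
      SchwartzMap.seminorm ℝ k 0 f * (u ^ k)⁻¹ * ∑' n : ℕ, (((n : ℝ) + 1) ^ k)⁻¹ :=
    tsum_of_norm_bounded ((summable_inv_succ_pow hk).hasSum.mul_left _)
      fun n ↦ norm_apply_succ_mul_le f k n hu
  rw [← le_div_iff₀' (by positivity)]
  exact h.trans_eq (by ring)

lemma exists_rpow_mul_norm_dilationSum_le_of_one_le (f : 𝓢(ℝ, E)) (c : ℝ) :
    ∃ C : ℝ, ∀ u : ℝ, 1 ≤ u → u ^ c * ‖dilationSum f u‖ ≤ C := by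
  obtain ⟨k, hk⟩ := exists_nat_ge (max 2 c)
  have hk1 : 1 < k := by exact_mod_cast (le_max_left 2 c).trans hk
  refine ⟨_, fun u hu ↦ le_trans ?_ (pow_mul_norm_dilationSum_le f hk1 (one_pos.trans_le hu))⟩
  have hpow : u ^ c ≤ u ^ k := by
    rw [← Real.rpow_natCast]
    exact Real.rpow_le_rpow_of_exponent_le hu ((le_max_right 2 c).trans hk)
  gcongr

variable [CompleteSpace E]

lemma hasSum_dilationSum (f : 𝓢(ℝ, E)) {u : ℝ} (hu : 0 < u) :
    HasSum (fun n : ℕ ↦ f ((n + 1) * u)) (dilationSum f u) :=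
  Summable.hasSum <| .of_norm_bounded ((summable_inv_succ_pow one_lt_two).mul_left _)
    fun n ↦ norm_apply_succ_mul_le f 2 n hu

lemma tsum_int_mul_eq_dilationSum {f : 𝓢(ℝ, E)} (hf : (f : ℝ → E).Even) {u : ℝ} (hu : 0 < u) :
    ∑' n : ℤ, f (n * u) = f 0 + 2 • dilationSum f u := by
  have hpos : HasSum (fun n : ℕ ↦ f (((n + 1 : ℤ) : ℝ) * u)) (dilationSum f u) := by
    simpa using hasSum_dilationSum f hu
  have hneg : HasSum (fun n : ℕ ↦ f (((-(n + 1) : ℤ) : ℝ) * u)) (dilationSum f u) := by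
    simpa only [Int.cast_neg, neg_mul, hf _] using hpos
  rw [(hpos.of_add_one_of_neg_add_one (f := fun n : ℤ ↦ f (n * u)) hneg).tsum_eq]
  simp only [Int.cast_zero, zero_mul, two_smul]
  abel

end DilationSum

section Poisson

lemma tsum_int_mul_eq_tsum_fourier (f : 𝓢(ℝ, ℂ)) {u : ℝ} (hu : u ≠ 0) :
    ∑' n : ℤ, f (n * u) = |u⁻¹| • ∑' n : ℤ, 𝓕 f (n * u⁻¹) := by
  let g : 𝓢(ℝ, ℂ) := SchwartzMap.compCLMOfContinuousLinearEquiv ℂ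
    (ContinuousLinearEquiv.unitsEquivAut ℝ (Units.mk0 u hu)) f
  have hFg (w : ℝ) : 𝓕 g w = |u⁻¹| • 𝓕 f (w * u⁻¹) := fourier_comp_mul_right f hu w
  calc ∑' n : ℤ, f (n * u) = ∑' n : ℤ, 𝓕 g n := by simpa using! g.tsum_eq_tsum_fourier 0
    _ = |u⁻¹| • ∑' n : ℤ, 𝓕 f (n * u⁻¹) := by simp_rw [hFg, tsum_const_smul'']

lemma dilationSum_eq_inv_smul_fourier {f : 𝓢(ℝ, ℂ)} (hf : f ∈ evenZeroSchwartz)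
    {u : ℝ} (hu : 0 < u) : dilationSum f u = u⁻¹ • dilationSum (𝓕 f) u⁻¹ := by
  obtain ⟨hev, h0, hint⟩ := hf
  have hFev : ∀ w, 𝓕 f (-w) = 𝓕 f w := even_fourier_of_even hev
  have hF0 : 𝓕 f 0 = 0 := by simpa [SchwartzMap.fourier_coe, Real.fourier_real_eq] using hint
  have h := tsum_int_mul_eq_tsum_fourier f hu.ne'
  rw [tsum_int_mul_eq_dilationSum hev hu,
    tsum_int_mul_eq_dilationSum hFev (inv_pos.2 hu), h0, hF0,
    abs_of_pos (inv_pos.2 hu), zero_add, zero_add, smul_comm] at h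
  exact smul_right_injective ℂ two_ne_zero h

lemma exists_rpow_mul_norm_dilationSum_le {f : 𝓢(ℝ, ℂ)} (hf : f ∈ evenZeroSchwartz) (c : ℝ) :
    ∃ C : ℝ, ∀ u : ℝ, 0 < u → u ^ c * ‖dilationSum f u‖ ≤ C := by
  obtain ⟨C₁, h₁⟩ := exists_rpow_mul_norm_dilationSum_le_of_one_le f c
  obtain ⟨C₂, h₂⟩ := exists_rpow_mul_norm_dilationSum_le_of_one_le (𝓕 f) (1 - c)
  refine ⟨max C₁ C₂, fun u hu ↦ ?_⟩
  rcases le_total 1 u with hu1 | hu1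
  · exact (h₁ u hu1).trans (le_max_left _ _)
  · calc u ^ c * ‖dilationSum f u‖
        = u⁻¹ ^ (1 - c) * ‖dilationSum (𝓕 f) u⁻¹‖ := by
          rw [dilationSum_eq_inv_smul_fourier hf hu, norm_smul,
            Real.norm_of_nonneg (inv_pos.2 hu).le, ← mul_assoc, Real.inv_rpow hu.le,
            ← Real.rpow_neg hu.le, neg_sub, Real.rpow_sub_one hu.ne', div_eq_mul_inv]
      _ ≤ C₂ := h₂ _ ((one_le_inv₀ hu).2 hu1)
      _ ≤ max C₁ C₂ := le_max_right _ _

end Poisson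

section LogDilationSum

variable {E : Type*} [NormedAddCommGroup E] [NormedSpace ℝ E]

/-- The function `u^c ∑_{n ≥ 1} f(nu)` in the coordinate `t = log u`. -/
noncomputable def logDilationSum (c : ℝ) (f : 𝓢(ℝ, E)) (t : ℝ) : E :=
  Real.exp (c * t) • dilationSum f (Real.exp t)

lemma norm_logDilationSum (c : ℝ) (f : 𝓢(ℝ, E)) (t : ℝ) :
    ‖logDilationSum c f t‖ = Real.exp (c * t) * ‖dilationSum f (Real.exp t)‖ := by
  rw [logDilationSum, norm_smul, Real.norm_of_nonneg (Real.exp_pos _).le]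

variable [CompleteSpace E]

lemma dilationSum_shiftedEulerCLM (c : ℝ) (f : 𝓢(ℝ, E)) {u : ℝ} (hu : 0 < u) :
    dilationSum (shiftedEulerCLM c f) u = c • dilationSum f u + dilationSum (eulerCLM f) u :=
  (((hasSum_dilationSum f hu).const_smul c).add (hasSum_dilationSum (eulerCLM f) hu)).tsum_eq

lemma hasDerivAt_dilationSum_exp (f : 𝓢(ℝ, E)) (t : ℝ) :
    HasDerivAt (fun s ↦ dilationSum f (Real.exp s)) (dilationSum (eulerCLM f) (Real.exp t)) t := by
  have hterm (n : ℕ) (s : ℝ) : HasDerivAt (fun s ↦ f ((n + 1) * Real.exp s))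
      (eulerCLM f ((n + 1) * Real.exp s)) s := by
    rw [eulerCLM_apply]
    exact (f.hasDerivAt _).scomp s ((Real.hasDerivAt_exp s).const_mul ((n : ℝ) + 1))
  -- On the half-line `(t - 1, ∞)` the differentiated series is dominated by its bound at `t - 1`.
  have hbound (n : ℕ) (s : ℝ) (hs : s ∈ Ioi (t - 1)) : ‖eulerCLM f ((n + 1) * Real.exp s)‖ ≤
      SchwartzMap.seminorm ℝ 2 0 (eulerCLM f) * (Real.exp (t - 1) ^ 2)⁻¹ *
        (((n : ℝ) + 1) ^ 2)⁻¹ := by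
    refine (norm_apply_succ_mul_le (eulerCLM f) 2 n (Real.exp_pos s)).trans ?_
    gcongr
    exact hs.le
  exact hasDerivAt_tsum_of_isPreconnected ((summable_inv_succ_pow one_lt_two).mul_left _)
    isOpen_Ioi isPreconnected_Ioi (fun n s _ ↦ hterm n s) hbound (mem_Ioi.2 (sub_one_lt t))
    (hasSum_dilationSum f (Real.exp_pos t)).summable (mem_Ioi.2 (sub_one_lt t))

lemma hasDerivAt_logDilationSum (c : ℝ) (f : 𝓢(ℝ, E)) (t : ℝ) :
    HasDerivAt (logDilationSum c f) (logDilationSum c (shiftedEulerCLM c f) t) t := by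
  have hexp : HasDerivAt (fun s ↦ Real.exp (c * s)) (Real.exp (c * t) * c) t := by
    simpa using ((hasDerivAt_id t).const_mul c).exp
  refine (hexp.smul (hasDerivAt_dilationSum_exp f t)).congr_deriv ?_
  rw [logDilationSum, dilationSum_shiftedEulerCLM c f (Real.exp_pos t), smul_add, mul_smul,
    add_comm]

lemma iteratedDeriv_logDilationSum (c : ℝ) (f : 𝓢(ℝ, E)) (n : ℕ) :
    iteratedDeriv n (logDilationSum c f) = logDilationSum c ((shiftedEulerCLM c)^[n] f) := by
  induction n with
  | zero => rw [iteratedDeriv_zero, Function.iterate_zero_apply]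
  | succ n ih =>
    rw [iteratedDeriv_succ, ih, Function.iterate_succ_apply']
    exact funext fun t ↦ (hasDerivAt_logDilationSum c _ t).deriv

lemma contDiff_logDilationSum (c : ℝ) (f : 𝓢(ℝ, E)) : ContDiff ℝ ∞ (logDilationSum c f) :=
  contDiff_of_differentiable_iteratedDeriv fun n _ t ↦ by
    rw [iteratedDeriv_logDilationSum]
    exact (hasDerivAt_logDilationSum c _ t).differentiableAt

end LogDilationSum

lemma exists_exp_abs_mul_norm_logDilationSum_le {f : 𝓢(ℝ, ℂ)} (hf : f ∈ evenZeroSchwartz)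
    (c : ℝ) : ∃ C : ℝ, ∀ t, Real.exp |t| * ‖logDilationSum c f t‖ ≤ C := by
  have hbounded (d : ℝ) : ∃ C : ℝ, ∀ t, ‖logDilationSum d f t‖ ≤ C := by
    obtain ⟨C, hC⟩ := exists_rpow_mul_norm_dilationSum_le hf d
    refine ⟨C, fun t ↦ ?_⟩
    rw [norm_logDilationSum, mul_comm d, Real.exp_mul]
    exact hC _ (Real.exp_pos t)
  obtain ⟨C₁, h₁⟩ := hbounded (c + 1)
  obtain ⟨C₂, h₂⟩ := hbounded (c - 1)
  refine ⟨C₁ + C₂, fun t ↦ ?_⟩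
  calc Real.exp |t| * ‖logDilationSum c f t‖
      ≤ (Real.exp t + Real.exp (-t)) * ‖logDilationSum c f t‖ := by
        gcongr; exact Real.exp_abs_le t
    _ = ‖logDilationSum (c + 1) f t‖ + ‖logDilationSum (c - 1) f t‖ := by
        simp only [norm_logDilationSum, add_mul, sub_mul, one_mul, sub_eq_add_neg (c * t),
          Real.exp_add]
        ring
    _ ≤ C₁ + C₂ := add_le_add (h₁ t) (h₂ t)

/-- `logDilationSum c f` as a Schwartz function, for `f ∈ S₀^ev`. -/
noncomputable def logDilationSumSchwartz (c : ℝ) {f : 𝓢(ℝ, ℂ)} (hf : f ∈ evenZeroSchwartz) :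
    𝓢(ℝ, ℂ) :=
  schwartzOfExpDecay (logDilationSum c f) (contDiff_logDilationSum c f) fun n ↦ by
    rw [iteratedDeriv_logDilationSum]
    exact exists_exp_abs_mul_norm_logDilationSum_le
      ((mapsTo_shiftedEulerCLM_evenZeroSchwartz c).iterate n hf) c

lemma Emap_eq_rpow_smul_dilationSum (f : 𝓢(ℝ, ℂ)) {u : ℝ} (hu : 0 ≤ u) :
    Emap f u = u ^ (1 / 2 : ℝ) • dilationSum f u := by
  rw [Emap, dilationSum, Complex.real_smul, Complex.ofReal_cpow hu]
  norm_num

lemma logDilationSum_add_half (β : ℝ) (f : 𝓢(ℝ, ℂ)) (t : ℝ) :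
    logDilationSum (β + 1 / 2) f t = Real.exp (β * t) * Emap f (Real.exp t) := by
  rw [logDilationSum, Emap_eq_rpow_smul_dilationSum f (Real.exp_pos t).le, ← Complex.real_smul,
    smul_smul, ← Real.exp_mul, ← Real.exp_add, add_mul, mul_comm t]

lemma contDiffOn_Emap (f : 𝓢(ℝ, ℂ)) : ContDiffOn ℝ ∞ (Emap f) (Ioi 0) := by
  have hlog : ContDiffOn ℝ ∞ Real.log (Ioi 0) := Real.contDiffOn_log.mono fun u hu ↦ ne_of_gt hu
  refine ((contDiff_logDilationSum (0 + 1 / 2) f).comp_contDiffOn hlog).congr fun u hu ↦ ?_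
  rw [Function.comp_apply, logDilationSum_add_half, Real.exp_log hu, zero_mul, Real.exp_zero,
    Complex.ofReal_one, one_mul]

lemma exists_norm_Emap_le_rpow {f : 𝓢(ℝ, ℂ)} (hf : f ∈ evenZeroSchwartz) (s : ℝ) :
    ∃ C : ℝ, ∀ u : ℝ, 0 < u → ‖Emap f u‖ ≤ C * u ^ s := by
  obtain ⟨C, hC⟩ := exists_rpow_mul_norm_dilationSum_le hf (1 / 2 - s)
  refine ⟨C, fun u hu ↦ ?_⟩
  have h := hC u hu
  rw [Real.rpow_sub hu, div_mul_eq_mul_div, div_le_iff₀ (by positivity)] at h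
  rwa [Emap_eq_rpow_smul_dilationSum f hu.le, norm_smul, Real.norm_of_nonneg (by positivity)]

lemma Emap_isBigO_zpow {f : 𝓢(ℝ, ℂ)} (hf : f ∈ evenZeroSchwartz) (m : ℤ) {l : Filter ℝ}
    (hl : ∀ᶠ u in l, 0 < u) : Emap f =O[l] fun u : ℝ ↦ u ^ m := by
  obtain ⟨C, hC⟩ := exists_norm_Emap_le_rpow hf m
  refine IsBigO.of_bound C (hl.mono fun u hu ↦ ?_)
  rw [Real.norm_of_nonneg (by positivity), ← Real.rpow_intCast]
  exact hC u hu

theorem stmt14 (f : SchwartzMap ℝ ℂ) (hev : ∀ x : ℝ, f (-x) = f x)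
    (h0 : f 0 = 0) (hint : ∫ x : ℝ, f x = 0) :
    ContDiffOn ℝ (⊤ : ℕ∞) (Emap (⇑f)) (Ioi 0) ∧
    (∀ β : ℝ, ∃ F : SchwartzMap ℝ ℂ,
      ∀ t : ℝ, F t = Real.exp (β * t) * Emap (⇑f) (Real.exp t)) ∧
    (∀ N : ℕ, (Emap (⇑f)) =O[nhdsWithin 0 (Ioi 0)] fun u : ℝ => u ^ N) ∧
    (∀ N : ℕ, (Emap (⇑f)) =O[atTop] fun u : ℝ => u ^ (-(N:ℤ))) := by
  have hf : f ∈ evenZeroSchwartz := ⟨hev, h0, hint⟩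
  refine ⟨contDiffOn_Emap f, fun β ↦ ⟨logDilationSumSchwartz (β + 1 / 2) hf,
    logDilationSum_add_half β f⟩, fun N ↦ ?_, fun N ↦ ?_⟩
  · exact_mod_cast Emap_isBigO_zpow hf N self_mem_nhdsWithin
  · exact Emap_isBigO_zpow hf (-N) (eventually_gt_atTop 0)
end

section
/- Let f ∈ S₀^ev and for L > 0 and n ∈ ℤ \ {0} define h(L,n) = L^{−1/2} · ζ(1/2 − 2πin/L) · ψ_f(2πn/L). Then h(·,n) is smooth in L on (0,∞), and for all m, k ∈ ℕ there exists C > 0 such that Σ_{n≠0} |∂_L^m h(L,n)|² ≤ C·L^k for all L ∈ (0,1]; in particular Σ_{n≠0} |∂_L^m h(L,n)|² = O(L^k) as L → 0⁺ for all m, k. -/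
open MeasureTheory Set

/-- `ψ_f(z) = ∫₀^∞ f(u) u^{1/2 - iz} du/u`. -/
noncomputable def psi (f : ℝ → ℂ) (z : ℂ) : ℂ :=
  ∫ u in Ioi (0:ℝ), f u * (u : ℂ) ^ ((1 : ℂ)/2 - Complex.I * z) / (u : ℂ)

/-- `h(L, n) = L^{-1/2} ζ(1/2 - 2πin/L) ψ_f(2πn/L)`. -/
noncomputable def hfun (f : ℝ → ℂ) (L : ℝ) (n : ℤ) : ℂ :=
  (L : ℂ) ^ (-(1/2 : ℂ)) *
    riemannZeta (1/2 - 2 * (Real.pi : ℂ) * Complex.I * (n : ℂ) / (L : ℂ)) *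
    psi f ((2 * Real.pi * (n : ℝ) / L : ℝ) : ℂ)

/-!
Since `ψ_f(z)` is the Mellin transform of `f` at `1/2 - iz`, every `h(·, n)` samples one and the
same function: `h(L, n) = L ^ (-1/2) g(-2πn / L)` with `g(x) = ζ(1/2 + ix) (Mellin f)(1/2 + ix)`.

This `g` is a Schwartz function. In `0 < Re s < 1` the Mellin transform of `f` is holomorphic and
decays faster than any power of `|s|`, by repeated integration by parts, while
`ζ(s) = s / (s - 1) - s ∫₁^∞ {t} t ^ (-s - 1) dt` grows at most linearly away from the edges of the
strip; Cauchy's estimates on discs of fixed radius turn the decay of the product into decay of all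
derivatives of `g`.

Differentiating `L ^ a g(c / L)` in `L` gives `L ^ (a - 1) G(c / L)` with `G` again Schwartz,
so `∂_L^m h(L, n) = L ^ (-1/2 - m) G(-2πn / L)` for a Schwartz `G` independent of `n`, and the rapid
decay of `G` yields both the powers of `L` and the summability in `n`.
-/

section

open Filter Topology Complex Asymptotics
open scoped SchwartzMap ContDiff

lemma cpow_sub_one_mul (s : ℂ) {z : ℂ} (hz : z ≠ 0) : z ^ (s - 1) * z = z ^ s := by
  rw [cpow_sub _ _ hz, cpow_one, div_mul_cancel₀ _ hz]

/-! ### Growth of the zeta function -/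

/-- The fractional part of `t`, cut off to `t > 1`; the cut-off makes the integral
`∫₁^∞ {t} t^{-s-1} dt` a Mellin transform, at `-s`. -/
noncomputable def fractTail : ℝ → ℂ :=
  indicator (Ioi 1) fun t => ((Int.fract t : ℝ) : ℂ)

lemma norm_fractTail_le_one (t : ℝ) : ‖fractTail t‖ ≤ 1 := by
  refine (norm_indicator_le_norm_self _ t).trans ?_
  rw [norm_real, Real.norm_of_nonneg (Int.fract_nonneg t)]
  exact (Int.fract_lt_one t).le

lemma measurable_fractTail : Measurable fractTail :=
  (measurable_ofReal.comp measurable_fract).indicator measurableSet_Ioi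

lemma locallyIntegrable_fractTail : LocallyIntegrable fractTail :=
  (locallyIntegrable_const (1 : ℝ)).mono measurable_fractTail.aestronglyMeasurable
    (Eventually.of_forall fun t => by simpa using norm_fractTail_le_one t)

lemma fractTail_isBigO_atTop : fractTail =O[atTop] (· ^ (-(0 : ℝ)) : ℝ → ℝ) :=
  .of_bound 1 (Eventually.of_forall fun t => by simpa using norm_fractTail_le_one t)

lemma fractTail_isBigO_nhdsGT_zero (b : ℝ) : fractTail =O[𝓝[>] 0] (· ^ (-b) : ℝ → ℝ) := by
  have hzero : fractTail =ᶠ[𝓝[>] 0] 0 := by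
    filter_upwards [mem_nhdsWithin_of_mem_nhds (Iio_mem_nhds one_pos)] with t ht
    exact indicator_of_notMem (notMem_Ioi.mpr (le_of_lt ht)) _
  exact hzero.trans_isBigO (isBigO_zero _ _)

section

variable {s : ℂ}

lemma mellinConvergent_fractTail (hs : s.re < 0) : MellinConvergent fractTail s :=
  mellinConvergent_of_isBigO_rpow (locallyIntegrable_fractTail.locallyIntegrableOn _)
    fractTail_isBigO_atTop hs (fractTail_isBigO_nhdsGT_zero (s.re - 1)) (by linarith)

lemma differentiableAt_mellin_fractTail (hs : s.re < 0) :
    DifferentiableAt ℂ (mellin fractTail) s :=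
  mellin_differentiableAt_of_isBigO_rpow (locallyIntegrable_fractTail.locallyIntegrableOn _)
    fractTail_isBigO_atTop hs (fractTail_isBigO_nhdsGT_zero (s.re - 1)) (by linarith)

lemma cpow_smul_fractTail (s : ℂ) :
    (fun t : ℝ => (t : ℂ) ^ (s - 1) • fractTail t) =
      indicator (Ioi 1) fun t : ℝ => (t : ℂ) ^ (s - 1) * ((Int.fract t : ℝ) : ℂ) := by
  ext t
  simp only [fractTail, smul_eq_mul, indicator_apply, mul_ite, mul_zero]

lemma mellin_fractTail (s : ℂ) :
    mellin fractTail s = ∫ t in Ioi (1 : ℝ), (t : ℂ) ^ (s - 1) * ((Int.fract t : ℝ) : ℂ) := by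
  rw [mellin, cpow_smul_fractTail, setIntegral_indicator measurableSet_Ioi, Ioi_inter_Ioi,
    max_eq_right zero_le_one]

lemma integrableOn_cpow_mul_fract (hs : s.re < 0) :
    IntegrableOn (fun t : ℝ => (t : ℂ) ^ (s - 1) * ((Int.fract t : ℝ) : ℂ)) (Ioi 1) := by
  have h := mellinConvergent_fractTail hs
  rw [MellinConvergent, cpow_smul_fractTail, integrableOn_indicator_iff measurableSet_Ioi] at h
  rwa [Ioi_inter_Ioi, max_eq_left zero_le_one] at h

lemma norm_mellin_fractTail_le (hs : s.re < 0) : ‖mellin fractTail s‖ ≤ (-s.re)⁻¹ := by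
  have hexp : s.re - 1 < -1 := by linarith
  have hbound : ∀ t ∈ Ioi (1 : ℝ),
      ‖(t : ℂ) ^ (s - 1) * ((Int.fract t : ℝ) : ℂ)‖ ≤ t ^ (s.re - 1) := by
    intro t ht
    have ht0 : 0 < t := one_pos.trans ht
    rw [norm_mul, norm_cpow_eq_rpow_re_of_pos ht0, norm_real,
      Real.norm_of_nonneg (Int.fract_nonneg t), sub_re, one_re]
    exact mul_le_of_le_one_right (by positivity) (Int.fract_lt_one t).le
  calc ‖mellin fractTail s‖
      ≤ ∫ t in Ioi (1 : ℝ), t ^ (s.re - 1) := by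
        rw [mellin_fractTail]
        exact norm_integral_le_of_norm_le (integrableOn_Ioi_rpow_of_lt hexp one_pos)
          ((ae_restrict_mem measurableSet_Ioi).mono hbound)
    _ = (-s.re)⁻¹ := by
        rw [integral_Ioi_rpow_of_lt hexp one_pos, Real.one_rpow, sub_add_cancel, neg_div, one_div,
          inv_neg]

lemma riemannZeta_eq_mul_integral_floor (hs : 1 < s.re) :
    riemannZeta s = s * ∫ t in Ioi (1 : ℝ), (⌊t⌋₊ : ℂ) * (t : ℂ) ^ (-(s + 1)) := by
  have hO : (fun n : ℕ => ∑ k ∈ Finset.Icc 1 n, (1 : ℕ → ℂ) k) =O[atTop]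
      fun n => (n : ℝ) ^ (1 : ℝ) :=
    .of_bound 1 (Eventually.of_forall fun n => by simp)
  simpa [LSeries_one_eq_riemannZeta hs] using
    LSeries_eq_mul_integral 1 zero_le_one hs (LSeriesSummable_one_iff.mpr hs) hO

lemma integral_floor_mul_cpow (hs : 1 < s.re) :
    ∫ t in Ioi (1 : ℝ), (⌊t⌋₊ : ℂ) * (t : ℂ) ^ (-(s + 1)) =
      (s - 1)⁻¹ - mellin fractTail (-s) := by
  have hre : (-s).re < -1 := by simpa using hs
  have hmain : ∫ t in Ioi (1 : ℝ), (t : ℂ) ^ (-s) = (s - 1)⁻¹ := by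
    rw [integral_Ioi_cpow_of_lt hre one_pos, ofReal_one, one_cpow, neg_div, ← div_neg, one_div]
    congr 1
    ring
  rw [mellin_fractTail, ← hmain, ← integral_sub (integrableOn_Ioi_cpow_of_lt hre one_pos)
    (integrableOn_cpow_mul_fract (by linarith))]
  refine setIntegral_congr_fun measurableSet_Ioi fun t ht => ?_
  have ht0 : 0 < t := one_pos.trans ht
  have hfloor : (⌊t⌋₊ : ℂ) = t - ((Int.fract t : ℝ) : ℂ) := by
    rw [← ofReal_natCast, natCast_floor_eq_intCast_floor ht0.le, ← ofReal_sub, Int.self_sub_fract]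
  have hcpow : (t : ℂ) ^ (-s) = t ^ (-s - 1) * t :=
    (cpow_sub_one_mul (-s) (ofReal_ne_zero.mpr ht0.ne')).symm
  simp only [hfloor, hcpow, neg_add']
  ring

/-- For `1 < Re s` this is Abel summation; both sides are holomorphic for `0 < Re s`. -/
lemma riemannZeta₀_eq_one_sub_mul_mellin (hs : 0 < s.re) :
    riemannZeta₀ s = 1 - s * mellin fractTail (-s) := by
  have hopen (a : ℝ) : IsOpen {z : ℂ | a < z.re} := isOpen_lt continuous_const continuous_re
  have hright : DifferentiableOn ℂ (fun z => 1 - z * mellin fractTail (-z)) {z | 0 < z.re} := by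
    intro z hz
    have hmellin : DifferentiableAt ℂ (fun z => mellin fractTail (-z)) z :=
      (differentiableAt_mellin_fractTail (s := -z) (by simpa using hz)).comp z
        differentiableAt_id.neg
    exact ((differentiableAt_id.mul hmellin).const_sub 1).differentiableWithinAt
  have habel : riemannZeta₀ =ᶠ[𝓝 2] fun z => 1 - z * mellin fractTail (-z) := by
    filter_upwards [(hopen 1).mem_nhds (show (1 : ℝ) < (2 : ℂ).re by simp)] with z hz
    have hz1 : z ≠ 1 := by rintro rfl; simp at hz
    have hpole : z - 1 ≠ 0 := sub_ne_zero.mpr hz1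
    rw [← add_right_inj (z - 1)⁻¹, ← riemannZeta_eq_inv_sub_add hz1,
      riemannZeta_eq_mul_integral_floor hz, integral_floor_mul_cpow hz]
    field_simp
    ring
  exact (differentiable_riemannZeta₀.differentiableOn.analyticOnNhd
    (hopen 0)).eqOn_of_preconnected_of_eventuallyEq (hright.analyticOnNhd (hopen 0))
    (convex_halfSpace_re_gt 0).isPreconnected (show (0 : ℝ) < (2 : ℂ).re by simp) habel hs

lemma norm_riemannZeta_le (hs : 0 < s.re) (hs1 : s ≠ 1) :
    ‖riemannZeta s‖ ≤ (‖s - 1‖⁻¹ + s.re⁻¹) * ‖s‖ := by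
  have hpole : s - 1 ≠ 0 := sub_ne_zero.mpr hs1
  have hzeta : riemannZeta s = (s - 1)⁻¹ * s - mellin fractTail (-s) * s := by
    rw [riemannZeta_eq_inv_sub_add hs1, riemannZeta₀_eq_one_sub_mul_mellin hs]
    field_simp
    ring
  have hmellin : ‖mellin fractTail (-s)‖ ≤ s.re⁻¹ := by
    simpa using norm_mellin_fractTail_le (s := -s) (by simpa using hs)
  calc ‖riemannZeta s‖ ≤ ‖(s - 1)⁻¹ * s‖ + ‖mellin fractTail (-s) * s‖ := by
        rw [hzeta]
        exact norm_sub_le _ _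
    _ = (‖s - 1‖⁻¹ + ‖mellin fractTail (-s)‖) * ‖s‖ := by
        rw [norm_mul, norm_mul, norm_inv, add_mul]
    _ ≤ (‖s - 1‖⁻¹ + s.re⁻¹) * ‖s‖ := by gcongr

end

/-! ### Rapid decay of Mellin transforms -/

variable {E : Type*} [NormedAddCommGroup E]

/-- `G` decays on `S` faster than any power of `‖s‖`. Nothing is asked of the derivatives: on
vertical strips, Cauchy's estimates provide their decay. -/
def RapidDecayOn (G : ℂ → E) (S : Set ℂ) : Prop :=
  ∀ N : ℕ, ∃ C : ℝ, ∀ s ∈ S, ‖s‖ ^ N * ‖G s‖ ≤ C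

lemma RapidDecayOn.mono {G : ℂ → E} {S T : Set ℂ} (hG : RapidDecayOn G T) (hST : S ⊆ T) :
    RapidDecayOn G S := fun N =>
  (hG N).imp fun _ hC s hs => hC s (hST hs)

lemma RapidDecayOn.exists_forall_closedBall_le {G : ℂ → E} {S : Set ℂ} (hG : RapidDecayOn G S)
    (r : ℝ) (k : ℕ) : ∃ M : ℝ, ∀ c, ∀ z ∈ S, z ∈ Metric.closedBall c r →
      (‖c‖ + 1) ^ k * ‖G z‖ ≤ M := by
  obtain ⟨C₀, hC₀⟩ := hG 0
  obtain ⟨C, hC⟩ := hG k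
  refine ⟨2 ^ (k - 1) * (C + (r + 1) ^ k * C₀), fun c z hzS hz => ?_⟩
  have hcz : ‖c - z‖ ≤ r := mem_closedBall_iff_norm'.mp hz
  have hr : 0 ≤ r := (norm_nonneg _).trans hcz
  have hc : ‖c‖ + 1 ≤ ‖z‖ + (r + 1) := by linarith [norm_le_norm_add_norm_sub' c z]
  calc (‖c‖ + 1) ^ k * ‖G z‖
      ≤ 2 ^ (k - 1) * (‖z‖ ^ k + (r + 1) ^ k) * ‖G z‖ := by
        gcongr
        exact (pow_le_pow_left₀ (by positivity) hc k).trans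
          (add_pow_le (norm_nonneg z) (by positivity) k)
    _ = 2 ^ (k - 1) * (‖z‖ ^ k * ‖G z‖ + (r + 1) ^ k * (‖z‖ ^ 0 * ‖G z‖)) := by ring
    _ ≤ 2 ^ (k - 1) * (C + (r + 1) ^ k * C₀) := by
        gcongr
        exacts [hC z hzS, hC₀ z hzS]

variable [NormedSpace ℂ E]

lemma RapidDecayOn.smul_of_norm_le {φ : ℂ → ℂ} {G : ℂ → E} {S : Set ℂ} {C : ℝ}
    (hG : RapidDecayOn G S) (hφ : ∀ s ∈ S, ‖φ s‖ ≤ C * ‖s‖) :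
    RapidDecayOn (fun s => φ s • G s) S := by
  intro N
  obtain ⟨D, hD⟩ := hG (N + 1)
  refine ⟨|C| * D, fun s hs => ?_⟩
  calc ‖s‖ ^ N * ‖φ s • G s‖ ≤ ‖s‖ ^ N * (|C| * ‖s‖ * ‖G s‖) := by
        rw [norm_smul]
        gcongr
        exact (hφ s hs).trans (by gcongr; exact le_abs_self C)
    _ = |C| * (‖s‖ ^ (N + 1) * ‖G s‖) := by ring
    _ ≤ |C| * D := by gcongr; exact hD s hs

lemma rpow_le_rpow_add_rpow {t a b x : ℝ} (ht : 0 < t) (hax : a ≤ x) (hxb : x ≤ b) :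
    t ^ x ≤ t ^ a + t ^ b := by
  rcases le_total 1 t with h | h
  · exact le_add_of_nonneg_of_le (by positivity) (Real.rpow_le_rpow_of_exponent_le h hxb)
  · exact le_add_of_le_of_nonneg (Real.rpow_le_rpow_of_exponent_ge ht h hax) (by positivity)

lemma exists_norm_mellin_le {f : ℝ → E} {a b : ℝ}
    (ha : MellinConvergent f a) (hb : MellinConvergent f b) :
    ∃ C : ℝ, ∀ s ∈ re ⁻¹' Icc a b, ‖mellin f s‖ ≤ C := by
  refine ⟨∫ t in Ioi (0 : ℝ), (‖(t : ℂ) ^ ((a : ℂ) - 1) • f t‖ + ‖(t : ℂ) ^ ((b : ℂ) - 1) • f t‖),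
    fun s hs => norm_integral_le_of_norm_le (ha.norm.add hb.norm) ?_⟩
  filter_upwards [ae_restrict_mem measurableSet_Ioi] with t ht
  simp only [norm_smul, norm_cpow_eq_rpow_re_of_pos ht, sub_re, one_re, ofReal_re, ← add_mul]
  gcongr
  exact rpow_le_rpow_add_rpow ht (sub_le_sub_right hs.1 1) (sub_le_sub_right hs.2 1)

lemma mellin_deriv_add_one [CompleteSpace E] {f f' : ℝ → E} {s : ℂ} (hs : 0 < s.re)
    (hcont : ContinuousAt f 0) (hderiv : ∀ t ∈ Ioi (0 : ℝ), HasDerivAt f (f' t) t)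
    (hf : MellinConvergent f s) (hf' : MellinConvergent f' (s + 1))
    (htop : Tendsto (fun t : ℝ => (t : ℂ) ^ s • f t) atTop (𝓝 0)) :
    mellin f' (s + 1) = -(s • mellin f s) := by
  have hs0 : s ≠ 0 := by rintro rfl; simp at hs
  have hcont' : ContinuousAt (fun t : ℝ => (t : ℂ) ^ s • f t) 0 :=
    (continuousAt_ofReal_cpow_const 0 s (.inl hs)).smul hcont
  have hderiv' : ∀ t ∈ Ioi (0 : ℝ), HasDerivAt (fun t : ℝ => (t : ℂ) ^ s • f t)
      ((t : ℂ) ^ (s + 1 - 1) • f' t + s • (t : ℂ) ^ (s - 1) • f t) t := by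
    intro t ht
    rw [add_sub_cancel_right, smul_smul]
    exact (hasDerivAt_ofReal_cpow_const ht.ne' hs0).smul (hderiv t ht)
  have hsmul : IntegrableOn (fun t : ℝ => s • (t : ℂ) ^ (s - 1) • f t) (Ioi 0) := hf.smul s
  have hftc := integral_Ioi_of_hasDerivAt_of_tendsto hcont'.continuousWithinAt hderiv'
    (hf'.add hsmul) htop
  rw [integral_add hf' hsmul, integral_smul, ofReal_zero, zero_cpow hs0, zero_smul,
    sub_zero] at hftc
  exact eq_neg_of_add_eq_zero_left hftc

lemma norm_le_norm_add_one {s : ℂ} (hs : 0 ≤ s.re) : ‖s‖ ≤ ‖s + 1‖ := by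
  rw [norm_def, norm_def]
  gcongr
  simp only [normSq_apply, add_re, one_re, add_im, one_im, add_zero]
  nlinarith

section Schwartz

variable (f : 𝓢(ℝ, E)) {s : ℂ}

lemma schwartzMap_isBigO_atTop_rpow (a : ℝ) : f =O[atTop] (· ^ a : ℝ → ℝ) := by
  refine ((f.isBigO_cocompact_rpow a).mono atTop_le_cocompact).congr' .rfl ?_
  filter_upwards [eventually_ge_atTop 0] with t ht
  rw [Real.norm_of_nonneg ht]

lemma schwartzMap_isBigO_nhdsGT_zero : f =O[𝓝[>] 0] (· ^ (-(0 : ℝ)) : ℝ → ℝ) := by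
  simpa using ((f.continuous.tendsto 0).isBigO_one ℝ).mono nhdsWithin_le_nhds

lemma mellinConvergent_schwartzMap (hs : 0 < s.re) : MellinConvergent f s :=
  mellinConvergent_of_isBigO_rpow (f.continuous.locallyIntegrable.locallyIntegrableOn _)
    (schwartzMap_isBigO_atTop_rpow f (-(s.re + 1))) (by linarith)
    (schwartzMap_isBigO_nhdsGT_zero f) hs

lemma differentiableAt_mellin_schwartzMap (hs : 0 < s.re) : DifferentiableAt ℂ (mellin f) s :=
  mellin_differentiableAt_of_isBigO_rpow (f.continuous.locallyIntegrable.locallyIntegrableOn _)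
    (schwartzMap_isBigO_atTop_rpow f (-(s.re + 1))) (by linarith)
    (schwartzMap_isBigO_nhdsGT_zero f) hs

lemma tendsto_cpow_smul_schwartzMap_atTop (s : ℂ) :
    Tendsto (fun t : ℝ => (t : ℂ) ^ s • f t) atTop (𝓝 0) := by
  have hcpow : (fun t : ℝ => (t : ℂ) ^ s) =O[atTop] (· ^ s.re : ℝ → ℝ) :=
    .of_norm_eventuallyLE <| by
      filter_upwards [eventually_gt_atTop 0] with t ht using (norm_cpow_eq_rpow_re_of_pos ht s).le
  refine (hcpow.smul (schwartzMap_isBigO_atTop_rpow f (-(s.re + 1)))).trans_tendsto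
    ((tendsto_rpow_neg_atTop one_pos).congr' ?_)
  filter_upwards [eventually_gt_atTop 0] with t ht
  rw [smul_eq_mul, ← Real.rpow_add ht]
  congr 1
  ring

lemma mellin_derivCLM_add_one [CompleteSpace E] (hs : 0 < s.re) :
    mellin (SchwartzMap.derivCLM ℝ E f) (s + 1) = -(s • mellin f s) :=
  mellin_deriv_add_one hs f.continuous.continuousAt (fun t _ => f.hasDerivAt t)
    (mellinConvergent_schwartzMap f hs)
    (mellinConvergent_schwartzMap _ (by simpa using by linarith))
    (tendsto_cpow_smul_schwartzMap_atTop f s)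

/-- Each integration by parts gains a factor `s` and moves the strip one unit to the right. -/
lemma rapidDecayOn_mellin_schwartzMap [CompleteSpace E] {a b : ℝ} (ha : 0 < a) :
    RapidDecayOn (mellin f) (re ⁻¹' Icc a b) := by
  intro N
  induction N generalizing f a b with
  | zero =>
    rcases le_or_gt a b with hab | hba
    · simpa using exists_norm_mellin_le (b := b)
        (mellinConvergent_schwartzMap f (s := a) (by simpa using ha))
        (mellinConvergent_schwartzMap f (s := b) (by simpa using ha.trans_le hab))
    · exact ⟨0, by simp [Icc_eq_empty_of_lt hba]⟩
  | succ N ih =>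
    obtain ⟨C, hC⟩ := ih (SchwartzMap.derivCLM ℝ E f) (b := b + 1) (add_pos ha one_pos)
    refine ⟨C, fun s hs => ?_⟩
    have hs0 : 0 < s.re := ha.trans_le hs.1
    calc ‖s‖ ^ (N + 1) * ‖mellin f s‖
        = ‖s‖ ^ N * ‖mellin (SchwartzMap.derivCLM ℝ E f) (s + 1)‖ := by
          rw [mellin_derivCLM_add_one f hs0, norm_neg, norm_smul]
          ring
      _ ≤ ‖s + 1‖ ^ N * ‖mellin (SchwartzMap.derivCLM ℝ E f) (s + 1)‖ := by
          gcongr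
          exact norm_le_norm_add_one hs0.le
      _ ≤ C := hC _ (by simpa using hs)

end Schwartz

/-! ### Schwartz functions from vertical strips -/

lemma iteratedDeriv_comp_add_ofReal_mul [CompleteSpace E] {H : ℂ → E} {a b : ℂ}
    (hH : ∀ x : ℝ, AnalyticAt ℂ H (a + x * b)) (m : ℕ) (x : ℝ) :
    iteratedDeriv m (fun x : ℝ => H (a + x * b)) x = b ^ m • iteratedDeriv m H (a + x * b) := by
  induction m generalizing x with
  | zero => simp
  | succ m ih =>
    have hline : HasDerivAt (fun y : ℝ => a + y * b) b x := by
      simpa using (ofRealCLM.hasDerivAt.mul_const b).const_add a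
    have hanalytic : AnalyticAt ℂ (iteratedDeriv m H) (a + x * b) := by
      rw [iteratedDeriv_eq_iterate]
      exact (hH x).iterated_deriv m
    have hcomp := hanalytic.differentiableAt.hasDerivAt.scomp x hline
    rw [iteratedDeriv_succ, iteratedDeriv_succ, funext ih, pow_succ, mul_smul]
    exact (hcomp.const_smul (b ^ m)).deriv

protected lemma RapidDecayOn.iteratedDeriv [CompleteSpace E] {G : ℂ → E} {S : Set ℂ} {r : ℝ}
    (hG : RapidDecayOn G S) (hdiff : DifferentiableOn ℂ G S) (hr : 0 < r) (n : ℕ) :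
    RapidDecayOn (iteratedDeriv n G) {c | Metric.closedBall c r ⊆ S} := by
  intro k
  obtain ⟨M, hM⟩ := hG.exists_forall_closedBall_le r k
  refine ⟨n.factorial * M / r ^ n, fun c hc => ?_⟩
  have hw : 0 < (‖c‖ + 1) ^ k := by positivity
  have hcauchy : ‖iteratedDeriv n G c‖ ≤ n.factorial * (M / (‖c‖ + 1) ^ k) / r ^ n := by
    refine Complex.norm_iteratedDeriv_le_of_forall_mem_sphere_norm_le n hr
      (hdiff.diffContOnCl_ball hc) fun z hz => ?_
    have hz' := Metric.sphere_subset_closedBall hz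
    exact (le_div_iff₀' hw).mpr (hM c z (hc hz') hz')
  calc ‖c‖ ^ k * ‖iteratedDeriv n G c‖
      ≤ (‖c‖ + 1) ^ k * (n.factorial * (M / (‖c‖ + 1) ^ k) / r ^ n) := by
        gcongr
        exact le_add_of_nonneg_right zero_le_one
    _ = n.factorial * M / r ^ n := by field_simp

lemma RapidDecayOn.exists_schwartzMap [CompleteSpace E] {G : ℂ → E} {a b σ : ℝ}
    (hG : RapidDecayOn G (re ⁻¹' Ioo a b)) (hdiff : DifferentiableOn ℂ G (re ⁻¹' Ioo a b))
    (hσ : σ ∈ Ioo a b) : ∃ g : 𝓢(ℝ, E), ∀ x : ℝ, g x = G (σ + x * I) := by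
  have hopen : IsOpen (re ⁻¹' Ioo a b) := isOpen_Ioo.preimage continuous_re
  have hline (x : ℝ) : (σ : ℂ) + x * I ∈ re ⁻¹' Ioo a b := by simpa using hσ
  have hanalytic (x : ℝ) : AnalyticAt ℂ G (σ + x * I) :=
    hdiff.analyticAt (hopen.mem_nhds (hline x))
  obtain ⟨r, hr, hball⟩ := Metric.nhds_basis_closedBall.mem_iff.mp (Ioo_mem_nhds hσ.1 hσ.2)
  have hdisc (x : ℝ) : Metric.closedBall ((σ : ℂ) + x * I) r ⊆ re ⁻¹' Ioo a b := by
    intro z hz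
    refine hball (mem_closedBall_iff_norm.mpr (le_trans ?_ (mem_closedBall_iff_norm.mp hz)))
    simpa using abs_re_le_norm (z - (σ + x * I))
  refine ⟨⟨fun x => G (σ + x * I), ?_, fun k n => ?_⟩, fun _ => rfl⟩
  · refine contDiff_iff_contDiffAt.mpr fun x => ?_
    have hG' : ContDiffAt ℝ ∞ G (σ + x * I) := (hanalytic x).contDiffAt.restrict_scalars ℝ
    have hL : ContDiff ℝ ∞ fun x : ℝ => (σ : ℂ) + x * I :=
      contDiff_const.add (ofRealCLM.contDiff.mul contDiff_const)
    exact hG'.comp x hL.contDiffAt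
  · obtain ⟨C, hC⟩ := hG.iteratedDeriv hdiff hr n k
    refine ⟨C, fun x => ?_⟩
    have hx : ‖x‖ ≤ ‖(σ : ℂ) + x * I‖ := by
      simpa using abs_im_le_norm ((σ : ℂ) + x * I)
    rw [norm_iteratedFDeriv_eq_norm_iteratedDeriv, iteratedDeriv_comp_add_ofReal_mul hanalytic,
      norm_smul, norm_pow, norm_I, one_pow, one_mul]
    exact le_trans (by gcongr) (hC _ (hdisc x))

/-! ### Derivatives in the scale -/

/-- The operator `a - x d/dx` on Schwartz functions, which is what differentiating
`L ^ a • g (c / L)` with respect to the scale `L` does to `g`. -/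
noncomputable def dilationDeriv (a : ℂ) (g : 𝓢(ℝ, E)) : 𝓢(ℝ, E) :=
  a • g - SchwartzMap.smulLeftCLM E (fun x : ℝ => x) (SchwartzMap.derivCLM ℝ E g)

lemma dilationDeriv_apply (a : ℂ) (g : 𝓢(ℝ, E)) (x : ℝ) :
    dilationDeriv a g x = a • g x - x • deriv g x := by
  rw [dilationDeriv, _root_.sub_apply, _root_.smul_apply,
    SchwartzMap.smulLeftCLM_apply_apply Function.HasTemperateGrowth.id', SchwartzMap.derivCLM_apply]

section

variable (g : 𝓢(ℝ, E)) (a : ℂ)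

lemma hasDerivAt_cpow_smul_comp_div (c : ℝ) {L : ℝ} (hL : 0 < L) :
    HasDerivAt (fun L : ℝ => (L : ℂ) ^ a • g (c / L))
      ((L : ℂ) ^ (a - 1) • dilationDeriv a g (c / L)) L := by
  have hL0 : (L : ℂ) ≠ 0 := ofReal_ne_zero.mpr hL.ne'
  have hcpow : HasDerivAt (fun L : ℝ => (L : ℂ) ^ a) (a * (L : ℂ) ^ (a - 1)) L := by
    simpa using ((hasDerivAt_id (L : ℂ)).cpow_const (.inl hL)).comp_ofReal
  have hdiv : HasDerivAt (fun L : ℝ => c / L) (-(L⁻¹ * (c / L))) L := by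
    convert! (hasDerivAt_inv hL.ne').const_mul c using 1
    field_simp
  refine (hcpow.smul ((g.hasDerivAt (c / L)).scomp L hdiv)).congr_deriv ?_
  simp only [dilationDeriv_apply, Function.comp_apply, ← cpow_sub_one_mul a hL0,
    RCLike.real_smul_eq_coe_smul (K := ℂ), coe_algebraMap]
  push_cast
  match_scalars <;> field_simp

lemma contDiffOn_cpow_smul_comp_div (c : ℝ) :
    ContDiffOn ℝ ∞ (fun L : ℝ => (L : ℂ) ^ a • g (c / L)) (Ioi 0) := by
  intro L hL
  have hanalytic : AnalyticAt ℂ (fun z : ℂ => z ^ a) L :=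
    analyticAt_id.cpow analyticAt_const (.inl hL)
  have hcpow : ContDiffAt ℝ ∞ (fun L : ℝ => (L : ℂ) ^ a) L :=
    (hanalytic.contDiffAt.restrict_scalars ℝ).comp L ofRealCLM.contDiff.contDiffAt
  have hdiv : ContDiffAt ℝ ∞ (fun L : ℝ => c / L) L :=
    contDiffAt_const.div contDiffAt_id (ne_of_gt hL)
  exact (hcpow.smul (g.smooth'.contDiffAt.comp L hdiv)).contDiffWithinAt

lemma exists_iteratedDeriv_cpow_smul_comp_div (m : ℕ) :
    ∃ G : 𝓢(ℝ, E), ∀ c L : ℝ, 0 < L →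
      iteratedDeriv m (fun L : ℝ => (L : ℂ) ^ a • g (c / L)) L = (L : ℂ) ^ (a - m) • G (c / L) := by
  induction m with
  | zero => exact ⟨g, fun c L _ => by simp⟩
  | succ m ih =>
    obtain ⟨G, hG⟩ := ih
    refine ⟨dilationDeriv (a - m) G, fun c L hL => ?_⟩
    have hnear : iteratedDeriv m (fun L : ℝ => (L : ℂ) ^ a • g (c / L)) =ᶠ[𝓝 L]
        fun L : ℝ => (L : ℂ) ^ (a - m) • G (c / L) :=
      (eventually_gt_nhds hL).mono (hG c)
    rw [iteratedDeriv_succ, hnear.deriv_eq, (hasDerivAt_cpow_smul_comp_div G _ c hL).deriv,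
      Nat.cast_succ, sub_add_eq_sub_sub]

lemma exists_norm_cpow_smul_comp_div_le (k : ℕ) :
    ∃ D : ℝ, ∀ c : ℝ, 1 ≤ |c| → ∀ L ∈ Ioc (0 : ℝ) 1,
      ‖(L : ℂ) ^ a • g (c / L)‖ ≤ D * L ^ k / |c| := by
  obtain ⟨M, hM⟩ := exists_nat_ge (-a.re)
  obtain ⟨D, hD⟩ := g.decay (k + M + 1) 0
  refine ⟨D, fun c hc L ⟨hL, hL1⟩ => ?_⟩
  have hD0 : 0 ≤ D := hD.1.le
  have hdecay : ‖g (c / L)‖ ≤ D * L ^ (k + M + 1) / |c| ^ (k + M + 1) := by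
    have h := hD.2 (c / L)
    rw [norm_iteratedFDeriv_zero, Real.norm_eq_abs, abs_div, abs_of_pos hL, div_pow] at h
    rw [le_div_iff₀ (by positivity)]
    rwa [div_mul_eq_mul_div, div_le_iff₀ (by positivity), mul_comm] at h
  have hcpow : L ^ a.re ≤ (L ^ M)⁻¹ := by
    rw [← Real.rpow_natCast, ← Real.rpow_neg hL.le]
    exact Real.rpow_le_rpow_of_exponent_ge hL hL1 (by linarith)
  calc ‖(L : ℂ) ^ a • g (c / L)‖
      ≤ (L ^ M)⁻¹ * (D * L ^ (k + M + 1) / |c| ^ (k + M + 1)) := by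
        rw [norm_smul, norm_cpow_eq_rpow_re_of_pos hL]
        gcongr
    _ = D * L ^ (k + 1) / |c| ^ (k + M + 1) := by
        rw [add_right_comm, pow_add L (k + 1) M]
        field_simp
    _ ≤ D * L ^ k / |c| := by
        have hL' : L ^ (k + 1) ≤ L ^ k := pow_le_pow_of_le_one hL.le hL1 k.le_succ
        have hc' : |c| ≤ |c| ^ (k + M + 1) := le_self_pow₀ hc (k + M).succ_ne_zero
        gcongr

lemma exists_norm_iteratedDeriv_cpow_smul_comp_div_le (m k : ℕ) :
    ∃ D : ℝ, ∀ c : ℝ, 1 ≤ |c| → ∀ L ∈ Ioc (0 : ℝ) 1,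
      ‖iteratedDeriv m (fun L : ℝ => (L : ℂ) ^ a • g (c / L)) L‖ ≤ D * L ^ k / |c| := by
  obtain ⟨G, hG⟩ := exists_iteratedDeriv_cpow_smul_comp_div g a m
  obtain ⟨D, hD⟩ := exists_norm_cpow_smul_comp_div_le G (a - m) k
  exact ⟨D, fun c hc L hL => (congrArg norm (hG c L hL.1)).trans_le (hD c hc L hL)⟩

end

/-! ### The Mellin–zeta product on a vertical line -/

lemma exists_schwartzMap_riemannZeta_smul_mellin [CompleteSpace E] (f : 𝓢(ℝ, E)) {σ : ℝ}
    (hσ : σ ∈ Ioo 0 1) :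
    ∃ g : 𝓢(ℝ, E), ∀ x : ℝ, g x = riemannZeta (σ + x * I) • mellin f (σ + x * I) := by
  have hstrip : re ⁻¹' Ioo (σ / 2) ((1 + σ) / 2) ⊆ re ⁻¹' Icc (σ / 2) ((1 + σ) / 2) :=
    preimage_mono Ioo_subset_Icc_self
  have hσ0 : 0 < σ / 2 := half_pos hσ.1
  have hσ1 : 0 < (1 - σ) / 2 := half_pos (sub_pos.mpr hσ.2)
  have hpos {s : ℂ} (hs : s ∈ re ⁻¹' Ioo (σ / 2) ((1 + σ) / 2)) : 0 < s.re := hσ0.trans hs.1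
  have hdist {s : ℂ} (hs : s ∈ re ⁻¹' Ioo (σ / 2) ((1 + σ) / 2)) : (1 - σ) / 2 ≤ ‖s - 1‖ := by
    have h := (neg_le_abs _).trans (abs_re_le_norm (s - 1))
    rw [sub_re, one_re] at h
    linarith [hs.2]
  have hpole {s : ℂ} (hs : s ∈ re ⁻¹' Ioo (σ / 2) ((1 + σ) / 2)) : s ≠ 1 :=
    sub_ne_zero.mp (norm_pos_iff.mp (hσ1.trans_le (hdist hs)))
  have hzeta : ∀ s ∈ re ⁻¹' Ioo (σ / 2) ((1 + σ) / 2),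
      ‖riemannZeta s‖ ≤ (((1 - σ) / 2)⁻¹ + (σ / 2)⁻¹) * ‖s‖ := fun s hs =>
    (norm_riemannZeta_le (hpos hs) (hpole hs)).trans (by gcongr; exacts [hdist hs, hs.1.le])
  refine (((rapidDecayOn_mellin_schwartzMap f hσ0).mono hstrip).smul_of_norm_le
    hzeta).exists_schwartzMap (fun s hs => ?_) ⟨by linarith [hσ.1], by linarith [hσ.2]⟩
  exact ((differentiableAt_riemannZeta (hpole hs)).smul
    (differentiableAt_mellin_schwartzMap f (hpos hs))).differentiableWithinAt

lemma psi_eq_mellin (f : ℝ → ℂ) (z : ℂ) : psi f z = mellin f (1 / 2 - I * z) := by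
  refine setIntegral_congr_fun measurableSet_Ioi fun u hu => ?_
  have hu0 : (u : ℂ) ≠ 0 := ofReal_ne_zero.mpr (ne_of_gt hu)
  simp only [smul_eq_mul, ← cpow_sub_one_mul (1 / 2 - I * z) hu0]
  field_simp

lemma exists_schwartzMap_hfun (f : 𝓢(ℝ, ℂ)) :
    ∃ g : 𝓢(ℝ, ℂ), ∀ n : ℤ, (fun L : ℝ => hfun f L n) =
      fun L : ℝ => (L : ℂ) ^ (-(1 / 2) : ℂ) • g (-(2 * Real.pi * n) / L) := by
  obtain ⟨g, hg⟩ := exists_schwartzMap_riemannZeta_smul_mellin f (σ := 1 / 2) (by norm_num)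
  refine ⟨g, fun n => funext fun L => ?_⟩
  rw [hfun, psi_eq_mellin, hg, smul_eq_mul, smul_eq_mul, mul_assoc]
  push_cast
  congr 3 <;> ring

lemma exists_norm_sq_iteratedDeriv_hfun_le (f : 𝓢(ℝ, ℂ)) (m k : ℕ) :
    ∃ D : ℝ, ∀ L ∈ Ioc (0 : ℝ) 1, ∀ n : ℤ, n ≠ 0 →
      ‖iteratedDeriv m (fun L : ℝ => hfun f L n) L‖ ^ 2 ≤ D * L ^ k * (1 / (n : ℝ) ^ 2) := by
  obtain ⟨g, hg⟩ := exists_schwartzMap_hfun f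
  obtain ⟨D, hD⟩ := exists_norm_iteratedDeriv_cpow_smul_comp_div_le g (-(1 / 2)) m k
  refine ⟨D ^ 2, fun L ⟨hL, hL1⟩ n hn => ?_⟩
  have hn1 : (1 : ℝ) ≤ |(n : ℝ)| := by exact_mod_cast Int.one_le_abs hn
  have hc : |(n : ℝ)| ≤ |-(2 * Real.pi * n)| := by
    rw [abs_neg, abs_mul, abs_of_pos Real.two_pi_pos]
    exact le_mul_of_one_le_left (abs_nonneg _) (by linarith [Real.pi_gt_three])
  calc ‖iteratedDeriv m (fun L : ℝ => hfun f L n) L‖ ^ 2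
      ≤ (D * L ^ k / |-(2 * Real.pi * n)|) ^ 2 := by
        rw [hg]
        gcongr
        exact hD _ (hn1.trans hc) L ⟨hL, hL1⟩
    _ = D ^ 2 * L ^ (k * 2) * (1 / |-(2 * Real.pi * n)| ^ 2) := by ring
    _ ≤ D ^ 2 * L ^ k * (1 / |(n : ℝ)| ^ 2) := by
        gcongr D ^ 2 * ?_ * (1 / ?_ ^ 2)
        exact pow_le_pow_of_le_one hL.le hL1 (Nat.le_mul_of_pos_right k two_pos)
    _ = D ^ 2 * L ^ k * (1 / (n : ℝ) ^ 2) := by rw [sq_abs]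

end

theorem stmt18_general (f : SchwartzMap ℝ ℂ) :
    (∀ n : ℤ, ContDiffOn ℝ (⊤ : ℕ∞) (fun L : ℝ => hfun (⇑f) L n) (Ioi 0)) ∧
    (∀ m k : ℕ, ∃ C : ℝ, 0 < C ∧ ∀ L ∈ Ioc (0:ℝ) 1,
      (Summable fun n : {n : ℤ // n ≠ 0} =>
        ‖iteratedDeriv m (fun L : ℝ => hfun (⇑f) L (n : ℤ)) L‖ ^ 2) ∧
      ∑' n : {n : ℤ // n ≠ 0},
        ‖iteratedDeriv m (fun L : ℝ => hfun (⇑f) L (n : ℤ)) L‖ ^ 2 ≤ C * L ^ k) := by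
  obtain ⟨g, hg⟩ := exists_schwartzMap_hfun f
  refine ⟨fun n => ?_, fun m k => ?_⟩
  · rw [hg]
    exact contDiffOn_cpow_smul_comp_div g _ _
  obtain ⟨D, hD⟩ := exists_norm_sq_iteratedDeriv_hfun_le f m k
  have hsum : Summable fun n : {n : ℤ // n ≠ 0} => 1 / (n : ℝ) ^ 2 :=
    (Real.summable_one_div_int_pow.mpr one_lt_two).subtype _
  refine ⟨max (D * ∑' n : {n : ℤ // n ≠ 0}, 1 / (n : ℝ) ^ 2) 1, by positivity, fun L hL => ?_⟩
  have hbound (n : {n : ℤ // n ≠ 0}) := hD L hL n n.2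
  have hsummable := (hsum.mul_left (D * L ^ k)).of_nonneg_of_le (fun _ => sq_nonneg _) hbound
  refine ⟨hsummable, (hsummable.tsum_le_tsum hbound (hsum.mul_left _)).trans ?_⟩
  rw [tsum_mul_left, mul_right_comm]
  exact mul_le_mul_of_nonneg_right (le_max_left _ _) (pow_nonneg hL.1.le k)

theorem stmt18 (f : SchwartzMap ℝ ℂ) (hev : ∀ x : ℝ, f (-x) = f x)
    (h0 : f 0 = 0) (hint : ∫ x : ℝ, f x = 0) :
    (∀ n : ℤ, n ≠ 0 → ContDiffOn ℝ (⊤ : ℕ∞) (fun L : ℝ => hfun (⇑f) L n) (Ioi 0)) ∧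
    (∀ m k : ℕ, ∃ C : ℝ, 0 < C ∧ ∀ L ∈ Ioc (0:ℝ) 1,
      (Summable fun n : {n : ℤ // n ≠ 0} =>
        ‖iteratedDeriv m (fun L : ℝ => hfun (⇑f) L (n : ℤ)) L‖ ^ 2) ∧
      ∑' n : {n : ℤ // n ≠ 0},
        ‖iteratedDeriv m (fun L : ℝ => hfun (⇑f) L (n : ℤ)) L‖ ^ 2 ≤ C * L ^ k) := by
  exact ⟨fun n _ => (stmt18_general f).1 n, (stmt18_general f).2⟩
end
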